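/- Identification of the limiting projection direction: let Σ be a symmetric positive definite real p×p matrix, β ∈ Q, and x ∈ ℝ^p. Then there exists A > 0 such that for every a ≥ A, P_{Q,Σ}(aβ + x) − aβ = P_{Q_β,Σ}(x); consequently Θ_{Q,Σ}(β, x) = lim_{n→∞} (P_{Q,Σ}(nβ + x) − nβ) exists and equals P_{Q_β,Σ}(x). -/

import Mathlib

open Matrix

/-- The metric projection `P_{C,Σ}(x) = argmin_{β ∈ C} (β - x)ᵀ Σ (β - x)`
(chosen via the axiom of choice; for `Σ` positive definite and `C` nonempty
closed convex it is the unique minimizer). -/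
noncomputable def metricProj {p : ℕ} (S : Matrix (Fin p) (Fin p) ℝ)
    (C : Set (Fin p → ℝ)) (x : Fin p → ℝ) : Fin p → ℝ :=
  Classical.epsilon fun γ => γ ∈ C ∧ ∀ β ∈ C,
    (γ - x) ⬝ᵥ S.mulVec (γ - x) ≤ (β - x) ⬝ᵥ S.mulVec (β - x)

/-- The constraint cone `Q = {β ∈ ℝ^p : β_j ≥ 0 for j = 1,…,q}`. -/
def coneQ (p q : ℕ) : Set (Fin p → ℝ) :=
  {v | ∀ j : Fin p, (j : ℕ) < q → 0 ≤ v j}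

/-- The tangent cone `Q_β = {v ∈ ℝ^p : v_j ≥ 0 whenever j ≤ q and β_j = 0}`. -/
def coneQat (p q : ℕ) (β : Fin p → ℝ) : Set (Fin p → ℝ) :=
  {v | ∀ j : Fin p, (j : ℕ) < q → β j = 0 → 0 ≤ v j}

/-
A minimizer over a set is a minimizer over every subset containing it. The translate `Q - aβ` lies
in `Q_β` for every `a`, and any fixed `v ∈ Q_β` lies in `Q - aβ` once `a` is large: where `β_j = 0`
the two constraints on `v_j` agree, and where `β_j > 0` the constraint `-a β_j ≤ v_j` is eventually
slack. For `v = P_{Q_β,Σ}(x)` this makes `v` the projection of `x` onto `Q - aβ`, that is,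
`aβ + v` the projection of `aβ + x` onto `Q`.
-/

open Filter Set

section StrictConvexity

variable {E : Type*} [AddCommGroup E] [Module ℝ E] {Q : QuadraticForm ℝ E}

lemma strictConvexOn_quadraticForm (hQ : Q.PosDef) : StrictConvexOn ℝ univ Q := by
  refine ⟨convex_univ, fun u _ v _ huv a b ha hb hab => ?_⟩
  have hgap : a * Q u + b * Q v - Q (a • u + b • v) = a * b * Q (u - v) := by
    obtain rfl : b = 1 - a := by linarith
    simp only [sub_eq_add_neg u v, QuadraticMap.map_add Q, QuadraticMap.map_smul,
      QuadraticMap.map_neg, QuadraticMap.polar_smul_left, QuadraticMap.polar_smul_right,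
      QuadraticMap.polar_neg_right, smul_eq_mul]
    ring
  have hpos : 0 < a * b * Q (u - v) := mul_pos (mul_pos ha hb) (hQ _ (sub_ne_zero.2 huv))
  simp only [smul_eq_mul]
  linarith

lemma eq_of_isMinOn_quadraticForm_sub (hQ : Q.PosDef) {C : Set E} (hC : Convex ℝ C) {x y z : E}
    (hy : y ∈ C) (hymin : IsMinOn (fun w => Q (w - x)) C y)
    (hz : z ∈ C) (hzmin : IsMinOn (fun w => Q (w - x)) C z) : y = z := by
  have hconv : StrictConvexOn ℝ univ fun w => Q (w - x) := by
    simpa [Function.comp_def, sub_eq_add_neg] using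
      (strictConvexOn_quadraticForm hQ).translate_left (-x)
  exact (hconv.subset (subset_univ C) hC).eq_of_isMinOn hymin hzmin hy hz

end StrictConvexity

section Coercivity

variable {E : Type*} [NormedAddCommGroup E] [NormedSpace ℝ E] [FiniteDimensional ℝ E]
  {Q : QuadraticForm ℝ E}

lemma continuous_quadraticMap {F : Type*} [SeminormedAddCommGroup F] [NormedSpace ℝ F]
    (Q : QuadraticMap ℝ E F) : Continuous Q := by
  obtain ⟨B, rfl⟩ := LinearMap.BilinMap.toQuadraticMap_surjective Q
  exact B.toContinuousBilinearMap.continuous₂.comp (continuous_id.prodMk continuous_id)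

lemma exists_pos_mul_norm_sq_le_quadraticForm (hQ : Q.PosDef) :
    ∃ c > 0, ∀ v, c * ‖v‖ ^ 2 ≤ Q v := by
  obtain ⟨c, hc, hle⟩ := (isCompact_sphere (0 : E) 1).exists_forall_le'
    (continuous_quadraticMap Q).continuousOn
    fun u hu => hQ u (ne_zero_of_mem_unit_sphere ⟨u, hu⟩)
  refine ⟨c, hc, fun v => ?_⟩
  rcases eq_or_ne v 0 with rfl | hv
  · simp
  have hunit : c ≤ Q (‖v‖⁻¹ • v) := hle _ (by simp [norm_smul, hv])
  calc c * ‖v‖ ^ 2 ≤ Q (‖v‖⁻¹ • v) * ‖v‖ ^ 2 := by gcongr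
    _ = Q v := by
      rw [QuadraticMap.map_smul, smul_eq_mul]
      field_simp

lemma tendsto_quadraticForm_cocompact_atTop (hQ : Q.PosDef) :
    Tendsto Q (cocompact E) atTop := by
  obtain ⟨c, hc, hle⟩ := exists_pos_mul_norm_sq_le_quadraticForm hQ
  have hnorm : Tendsto (fun v : E => ‖v‖ ^ 2) (cocompact E) atTop :=
    (tendsto_pow_atTop two_ne_zero).comp tendsto_norm_cocompact_atTop
  exact tendsto_atTop_mono hle (hnorm.const_mul_atTop hc)

lemma exists_isMinOn_quadraticForm_sub (hQ : Q.PosDef) {C : Set E} (hC : IsClosed C)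
    (hne : C.Nonempty) (x : E) :
    ∃ y ∈ C, IsMinOn (fun z => Q (z - x)) C y := by
  obtain ⟨y₀, hy₀⟩ := hne
  have hcont : Continuous fun z => Q (z - x) :=
    (continuous_quadraticMap Q).comp (continuous_id.sub continuous_const)
  have htends : Tendsto (fun z => Q (z - x)) (cocompact E) atTop :=
    (tendsto_quadraticForm_cocompact_atTop hQ).comp
      (Homeomorph.subRight x).isClosedEmbedding.tendsto_cocompact
  exact hcont.continuousOn.exists_isMinOn' hC hy₀
    ((htends.eventually_ge_atTop _).filter_mono inf_le_left)

end Coercivity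

section MetricProjection

variable {p : ℕ} {S : Matrix (Fin p) (Fin p) ℝ} {C T : Set (Fin p → ℝ)} {w x y : Fin p → ℝ}

lemma metricProj_eq_epsilon_isMinOn (S : Matrix (Fin p) (Fin p) ℝ) (C : Set (Fin p → ℝ))
    (x : Fin p → ℝ) :
    metricProj S C x =
      Classical.epsilon fun y => y ∈ C ∧ IsMinOn (fun z => S.toQuadraticForm' (z - x)) C y := by
  simp [metricProj, isMinOn_iff, Matrix.toQuadraticForm', Matrix.toLinearMap₂'_apply']

lemma metricProj_mem_and_isMinOn (hS : S.PosDef) (hC : IsClosed C) (hne : C.Nonempty)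
    (x : Fin p → ℝ) :
    metricProj S C x ∈ C ∧
      IsMinOn (fun z => S.toQuadraticForm' (z - x)) C (metricProj S C x) := by
  rw [metricProj_eq_epsilon_isMinOn]
  exact Classical.epsilon_spec (exists_isMinOn_quadraticForm_sub hS.toQuadraticForm' hC hne x)

lemma metricProj_eq_of_isMinOn (hS : S.PosDef) (hC : Convex ℝ C) (hy : y ∈ C)
    (hmin : IsMinOn (fun z => S.toQuadraticForm' (z - x)) C y) : metricProj S C x = y := by
  have hspec := Classical.epsilon_spec
    (p := fun y => y ∈ C ∧ IsMinOn (fun z => S.toQuadraticForm' (z - x)) C y) ⟨y, hy, hmin⟩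
  rw [metricProj_eq_epsilon_isMinOn]
  exact eq_of_isMinOn_quadraticForm_sub hS.toQuadraticForm' hC hspec.1 hspec.2 hy hmin

lemma metricProj_add_eq_of_mapsTo_sub (hS : S.PosDef) (hC : Convex ℝ C) (hT : IsClosed T)
    (hsub : MapsTo (· - w) C T) (hmem : w + metricProj S T x ∈ C) :
    metricProj S C (w + x) = w + metricProj S T x := by
  have hmin := (metricProj_mem_and_isMinOn hS hT ⟨_, hsub hmem⟩ x).2
  refine metricProj_eq_of_isMinOn hS hC hmem (isMinOn_iff.2 fun z hz => ?_)
  simpa only [add_sub_add_left_eq_sub, sub_sub] using isMinOn_iff.1 hmin (z - w) (hsub hz)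

end MetricProjection

section Cones

variable {p q : ℕ} {β v : Fin p → ℝ}

lemma convex_coneQ (p q : ℕ) : Convex ℝ (coneQ p q) := by
  simp only [coneQ, ofPred_forall]
  exact convex_iInter₂ fun j _ => convex_halfSpace_ge (LinearMap.proj j).isLinear 0

lemma isClosed_coneQat (p q : ℕ) (β : Fin p → ℝ) : IsClosed (coneQat p q β) := by
  simp only [coneQat, ofPred_forall]
  exact isClosed_iInter fun j => isClosed_iInter fun _ => isClosed_iInter fun _ =>
    isClosed_le continuous_const (continuous_apply j)

lemma mapsTo_sub_smul_coneQ_coneQat (p q : ℕ) (β : Fin p → ℝ) (a : ℝ) :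
    MapsTo (· - a • β) (coneQ p q) (coneQat p q β) :=
  fun v hv j hj hβj => by simpa [hβj] using hv j hj

lemma eventually_smul_add_mem_coneQ (hβ : β ∈ coneQ p q) (hv : v ∈ coneQat p q β) :
    ∀ᶠ a : ℝ in atTop, a • β + v ∈ coneQ p q := by
  refine eventually_all.2 fun j => eventually_all.2 fun hj => ?_
  rcases (hβ j hj).eq_or_lt with hβj | hβj
  · exact .of_forall fun a => by simpa [← hβj] using hv j hj hβj.symm
  · exact (tendsto_atTop_add_const_right _ (v j)
      (tendsto_id.atTop_mul_const hβj)).eventually_ge_atTop 0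

lemma eventually_metricProj_smul_add_sub_eq {S : Matrix (Fin p) (Fin p) ℝ} (hS : S.PosDef)
    (hβ : β ∈ coneQ p q) (x : Fin p → ℝ) :
    ∀ᶠ a : ℝ in atTop,
      metricProj S (coneQ p q) (a • β + x) - a • β = metricProj S (coneQat p q β) x := by
  have hclosed := isClosed_coneQat p q β
  have hproj := (metricProj_mem_and_isMinOn hS hclosed ⟨0, fun _ _ _ => le_rfl⟩ x).1
  filter_upwards [eventually_smul_add_mem_coneQ hβ hproj] with a ha
  rw [metricProj_add_eq_of_mapsTo_sub hS (convex_coneQ p q) hclosed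
    (mapsTo_sub_smul_coneQ_coneQat p q β a) ha, add_sub_cancel_left]

end Cones

/-- Identification of the limiting projection direction:
`Θ_{Q,Σ}(β,x)` exists and equals `P_{Q_β,Σ}(x)`. -/
theorem limiting_projection_identification {p q : ℕ} (hq : 1 ≤ q) (hqp : q ≤ p)
    (S : Matrix (Fin p) (Fin p) ℝ) (hsymm : S.IsSymm) (hpd : S.PosDef)
    (β : Fin p → ℝ) (hβ : β ∈ coneQ p q) (x : Fin p → ℝ) :
    (∃ A > (0:ℝ), ∀ a : ℝ, A ≤ a →
      metricProj S (coneQ p q) (a • β + x) - a • β =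
        metricProj S (coneQat p q β) x) ∧
    Filter.Tendsto
      (fun n : ℕ => metricProj S (coneQ p q) ((n : ℝ) • β + x) - (n : ℝ) • β)
      Filter.atTop (nhds (metricProj S (coneQat p q β) x)) := by
  have hev := eventually_metricProj_smul_add_sub_eq hpd hβ x
  obtain ⟨A, hA⟩ := eventually_atTop.1 hev
  refine ⟨⟨max A 1, by positivity, fun a ha => hA a (le_of_max_le_left ha)⟩, ?_⟩
  exact tendsto_const_nhds.congr'
    ((tendsto_natCast_atTop_atTop.eventually hev).mono fun _ hn => hn.symm)
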